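/- Let p > 3 be a prime, a a nonnegative integer, and r, s even positive integers with (p-1) not dividing r and r ≡ s (mod p^a(p-1)). Then (1 - p^(r-1)) * B_r / r ≡ (1 - p^(s-1)) * B_s / s (mod p^(a+1)), as a congruence of p-integers (i.e., the p-adic valuation of the difference is at least a+1). -/

import Mathlib

/-!
Let `N = p ^ M` and let `c` be prime to `p`. Multiplication by `c` permutes the residues prime to
`N`, and writing `c * k = c * k % N + N * (c * k / N)` and expanding the `r`-th power modulo `N ^ 2`
gives Voronoi's congruence `(c ^ r - 1) * ∑ k ^ r ≡ r * N * T_r`, where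
`T_r = ∑ (c * k / N) * (c * k % N) ^ (r - 1)`. Dividing by `r * N` and letting `M → ∞`,
Faulhaber's formula turns the left side into `(c ^ r - 1) * (1 - p ^ (r - 1)) * B_r / r`, which is
therefore the `p`-adic limit of the integers `T_r`. By Euler's theorem `T_r ≡ T_s` and
`c ^ r ≡ c ^ s` modulo `p ^ (a + 1)`, and both congruences pass to the limit. Finally, as `p - 1`
does not divide `r`, one can choose `c` so that `c ^ r - 1` is a `p`-adic unit.
-/

open Filter Topology Finset

/-- The residues in `[0, N)` prime to `N`, the index set of Voronoi's congruence. -/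
def totatives (N : ℕ) : Finset ℕ := {k ∈ range N | N.Coprime k}

lemma mem_totatives {N k : ℕ} : k ∈ totatives N ↔ k < N ∧ N.Coprime k := by
  simp only [totatives, mem_filter, mem_range]

lemma mul_mod_mem_totatives {N c k : ℕ} (hc : N.Coprime c) (hk : k ∈ totatives N) :
    c * k % N ∈ totatives N := by
  obtain ⟨hlt, hcop⟩ := mem_totatives.1 hk
  refine mem_totatives.2 ⟨Nat.mod_lt _ (by lia), ?_⟩
  rw [Nat.Coprime, Nat.gcd_comm, ← Nat.gcd_rec]
  exact hc.mul_right hcop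

lemma sum_totatives_mul_mod {A : Type*} [AddCommMonoid A] {N c : ℕ} (hc : N.Coprime c)
    (f : ℕ → A) : ∑ k ∈ totatives N, f (c * k % N) = ∑ k ∈ totatives N, f k := by
  have maps : Set.MapsTo (fun k => c * k % N) (totatives N) (totatives N) :=
    fun _ hk => mul_mod_mem_totatives hc hk
  have inj : Set.InjOn (fun k => c * k % N) (totatives N) := fun x hx y hy hxy =>
    (Nat.ModEq.cancel_left_of_coprime hc hxy).eq_of_lt_of_lt
      (mem_totatives.1 hx).1 (mem_totatives.1 hy).1
  exact sum_nbij _ maps inj (surjOn_of_injOn_of_card_le _ maps inj le_rfl) fun _ _ => rfl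

lemma sum_filter_dvd_range_mul {A : Type*} [AddCommMonoid A] {d : ℕ} (hd : 0 < d) (N : ℕ)
    (f : ℕ → A) : ∑ k ∈ range (d * N) with d ∣ k, f k = ∑ k ∈ range N, f (d * k) := by
  have image_eq : {k ∈ range (d * N) | d ∣ k} = (range N).image (d * ·) := by
    ext k
    simp only [mem_filter, mem_range, mem_image]
    constructor
    · rintro ⟨hlt, j, rfl⟩
      exact ⟨j, Nat.lt_of_mul_lt_mul_left hlt, rfl⟩
    · rintro ⟨j, hj, rfl⟩
      exact ⟨Nat.mul_lt_mul_of_pos_left hj hd, dvd_mul_right d j⟩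
  rw [image_eq, sum_image fun _ _ _ _ h => Nat.eq_of_mul_eq_mul_left hd h]

lemma sum_totatives_prime_pow {A : Type*} [AddCommMonoid A] {p : ℕ} (hp : p.Prime) (M : ℕ)
    (f : ℕ → A) :
    ∑ k ∈ range (p ^ M), f (p * k) + ∑ k ∈ totatives (p ^ (M + 1)), f k =
      ∑ k ∈ range (p ^ (M + 1)), f k := by
  have totatives_eq : totatives (p ^ (M + 1)) = {k ∈ range (p ^ (M + 1)) | ¬ p ∣ k} := by
    simp only [totatives, Nat.coprime_pow_left_iff M.succ_pos, hp.coprime_iff_not_dvd]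
  rw [← sum_filter_dvd_range_mul hp.pos, ← pow_succ', totatives_eq,
    sum_filter_add_sum_filter_not]

/-- The sum on the right of Voronoi's congruence, for the exponent `n = r - 1`. It is taken over
`(c * k % N) ^ n` rather than Voronoi's `(c * k) ^ n`, so that the congruence is a binomial
expansion in `ℕ`. -/
def voronoiSum (N c n : ℕ) : ℕ := ∑ k ∈ totatives N, c * k / N * (c * k % N) ^ n

theorem voronoi_congruence {N c : ℕ} (hc : N.Coprime c) (r : ℕ) :
    c ^ r * ∑ k ∈ totatives N, k ^ r ≡
      ∑ k ∈ totatives N, k ^ r + r * N * voronoiSum N c (r - 1) [MOD N ^ 2] := by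
  have term (k : ℕ) :
      (c * k) ^ r ≡ (c * k % N) ^ r + r * N * (c * k / N * (c * k % N) ^ (r - 1)) [MOD N ^ 2] := by
    obtain ⟨t, ht⟩ := Polynomial.powAddExpansion (c * k % N) (N * (c * k / N)) r
    rw [Nat.mod_add_div, Nat.cast_id] at ht
    have expansion : (c * k) ^ r = (c * k % N) ^ r +
        r * N * (c * k / N * (c * k % N) ^ (r - 1)) + N ^ 2 * (t * (c * k / N) ^ 2) := by
      rw [ht]
      ring
    rw [expansion]
    exact Nat.add_mul_mod_self_left _ _ _
  calc c ^ r * ∑ k ∈ totatives N, k ^ r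
      = ∑ k ∈ totatives N, (c * k) ^ r := by simp only [mul_sum, mul_pow]
    _ ≡ ∑ k ∈ totatives N, ((c * k % N) ^ r + r * N * (c * k / N * (c * k % N) ^ (r - 1)))
        [MOD N ^ 2] := Nat.ModEq.sum fun k _ => term k
    _ = ∑ k ∈ totatives N, k ^ r + r * N * voronoiSum N c (r - 1) := by
        rw [sum_add_distrib, sum_totatives_mul_mod hc (· ^ r), ← mul_sum, voronoiSum]

lemma pow_modEq_pow_of_modEq_totient {q x m n : ℕ} (hx : x.Coprime q)
    (hmn : m ≡ n [MOD q.totient]) : x ^ m ≡ x ^ n [MOD q] := by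
  rw [← ZMod.natCast_eq_natCast_iff]
  have hunit : ZMod.unitOfCoprime x hx ^ m = ZMod.unitOfCoprime x hx ^ n :=
    pow_eq_pow_iff_modEq.2 (hmn.of_dvd (orderOf_dvd_of_pow_eq_one (ZMod.pow_totient _)))
  simpa using congrArg Units.val hunit

lemma voronoiSum_modEq {N c q m n : ℕ} (hc : N.Coprime c) (hq : q ∣ N)
    (hmn : m ≡ n [MOD q.totient]) : voronoiSum N c m ≡ voronoiSum N c n [MOD q] :=
  Nat.ModEq.sum fun _ hk => (pow_modEq_pow_of_modEq_totient
    ((mem_totatives.1 (mul_mod_mem_totatives hc hk)).2.coprime_dvd_left hq).symm hmn).mul_left _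

lemma tendsto_sum_range_pow_div {K ι : Type*} [Field K] [CharZero K] [TopologicalSpace K]
    [IsTopologicalSemiring K] {l : Filter ι} {u : ι → ℕ}
    (hu : Tendsto (fun i => (u i : K)) l (𝓝[≠] 0)) (r : ℕ) :
    Tendsto (fun i => (∑ k ∈ range (u i), (k : K) ^ r) / u i) l (𝓝 (bernoulli r : ℚ)) := by
  let F (x : K) : K :=
    ∑ i ∈ range (r + 1), (bernoulli i : ℚ) * (r + 1).choose i * x ^ (r - i) / (r + 1)
  have faulhaber (N : ℕ) (hN : (N : K) ≠ 0) : F N = (∑ k ∈ range N, (k : K) ^ r) / N := by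
    have h := congrArg (Rat.cast : ℚ → K) (sum_range_pow N r)
    push_cast at h
    rw [h, sum_div]
    refine sum_congr rfl fun i hi => ?_
    rw [Nat.succ_sub (by grind), pow_succ]
    field_simp
  have F_zero : F 0 = (bernoulli r : ℚ) := by
    have : (r : K) + 1 ≠ 0 := by exact_mod_cast r.succ_ne_zero
    have lower_terms : ∀ i ∈ range r,
        ((bernoulli i : ℚ) : K) * (r + 1).choose i * 0 ^ (r - i) / (r + 1) = 0 := fun i hi => by
      rw [zero_pow (by grind), mul_zero, zero_div]
    simp only [F]
    rw [sum_range_succ, sum_eq_zero lower_terms, zero_add, Nat.choose_succ_self_right, Nat.sub_self,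
      pow_zero, mul_one, Nat.cast_succ, mul_div_cancel_right₀ _ this]
  have F_cont : Continuous F := by fun_prop
  rw [tendsto_nhdsWithin_iff] at hu
  rw [← F_zero]
  exact ((F_cont.tendsto 0).comp hu.1).congr' (hu.2.mono fun i hi => faulhaber (u i) hi)

/-- `(1 - p ^ (r - 1)) * B_r / r`, that is, `-ζ(1 - r)` without its Euler factor at `p`,
for `0 < r`; at `r = 0` the division makes it `0`. -/
noncomputable def depletedBernoulli (p r : ℕ) : ℚ := (1 - (p : ℚ) ^ (r - 1)) * bernoulli r / r

lemma tendsto_natCast_prime_pow (p : ℕ) [hp : Fact p.Prime] :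
    Tendsto (fun M => ((p ^ M : ℕ) : ℚ_[p])) atTop (𝓝[≠] 0) := by
  refine tendsto_nhdsWithin_iff.2 ⟨?_, .of_forall fun M => ?_⟩
  · simpa only [Nat.cast_pow] using tendsto_pow_atTop_nhds_zero_of_norm_lt_one Padic.norm_p_lt_one
  · exact Nat.cast_ne_zero.2 (pow_ne_zero M hp.out.ne_zero)

lemma tendsto_sum_totatives_pow_div (p : ℕ) [hp : Fact p.Prime] {r : ℕ} (hr : 0 < r) :
    Tendsto (fun M => (∑ k ∈ totatives (p ^ (M + 1)), (k : ℚ_[p]) ^ r) / (p ^ (M + 1) : ℕ)) atTop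
      (𝓝 ((1 - (p : ℚ_[p]) ^ (r - 1)) * (bernoulli r : ℚ))) := by
  have hp0 : (p : ℚ_[p]) ≠ 0 := by exact_mod_cast hp.out.ne_zero
  have lim := tendsto_sum_range_pow_div (tendsto_natCast_prime_pow p) r
  rw [sub_mul, one_mul]
  refine ((lim.comp (tendsto_add_atTop_nat 1)).sub (lim.const_mul _)).congr fun M => ?_
  have split := sum_totatives_prime_pow hp.out M fun k => (k : ℚ_[p]) ^ r
  simp only [Nat.cast_mul, mul_pow, ← mul_sum] at split
  simp only [Function.comp_apply, ← split]
  rw [← Nat.sub_add_cancel hr]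
  push_cast
  field_simp
  ring

section Padic

variable {p : ℕ} [hp : Fact p.Prime]

lemma norm_voronoi_error_le {N c r : ℕ} (hN : N ≠ 0) (hr : r ≠ 0) (hc : N.Coprime c) :
    ‖((c : ℚ_[p]) ^ r - 1) * ((∑ k ∈ totatives N, (k : ℚ_[p]) ^ r) / N / r) -
      voronoiSum N c (r - 1)‖ ≤ ‖(N / r : ℚ_[p])‖ := by
  have hN0 : (N : ℚ_[p]) ≠ 0 := by exact_mod_cast hN
  have hr0 : (r : ℚ_[p]) ≠ 0 := by exact_mod_cast hr
  obtain ⟨d, hd⟩ := Nat.modEq_iff_dvd.1 (voronoi_congruence hc r).symm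
  have hd' := congrArg (Int.cast : ℤ → ℚ_[p]) hd
  push_cast at hd'
  have error_eq : ((c : ℚ_[p]) ^ r - 1) * ((∑ k ∈ totatives N, (k : ℚ_[p]) ^ r) / N / r) -
      voronoiSum N c (r - 1) = N / r * d := by
    field_simp
    linear_combination hd'
  rw [error_eq, norm_mul]
  exact mul_le_of_le_one_right (norm_nonneg _) (Padic.norm_int_le_one d)

lemma tendsto_voronoiSum {c r : ℕ} (hr : 0 < r) (hc : p.Coprime c) :
    Tendsto (fun M => (voronoiSum (p ^ (M + 1)) c (r - 1) : ℚ_[p])) atTop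
      (𝓝 (((c : ℚ_[p]) ^ r - 1) * depletedBernoulli p r)) := by
  have main := ((tendsto_sum_totatives_pow_div p hr).div_const (r : ℚ_[p])).const_mul
    ((c : ℚ_[p]) ^ r - 1)
  have bound : Tendsto (fun M => ‖((p ^ (M + 1) : ℕ) / r : ℚ_[p])‖) atTop (𝓝 0) := by
    simpa using (((tendsto_natCast_prime_pow p).mono_right nhdsWithin_le_nhds).comp
      (tendsto_add_atTop_nat 1)).div_const (r : ℚ_[p]) |>.norm
  have error := squeeze_zero_norm (fun M => norm_voronoi_error_le (p := p)
    (pow_ne_zero (M + 1) hp.out.ne_zero) hr.ne' (hc.pow_left (M + 1))) bound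
  have limit_eq : ((1 - (p : ℚ_[p]) ^ (r - 1)) * (bernoulli r : ℚ)) / r =
      (depletedBernoulli p r : ℚ_[p]) := by
    rw [depletedBernoulli]
    push_cast
    rfl
  rw [← limit_eq]
  simpa only [sub_sub_cancel, sub_zero] using main.sub error

lemma exists_coprime_norm_pow_sub_one_eq_one {r : ℕ} (hr : ¬ (p - 1) ∣ r) :
    ∃ c : ℕ, p.Coprime c ∧ ‖(c : ℚ_[p]) ^ r - 1‖ = 1 := by
  obtain ⟨u, hu⟩ : ∃ u : (ZMod p)ˣ, u ^ r ≠ 1 := by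
    by_contra! h
    exact hr (by simpa only [ZMod.card] using (FiniteField.forall_pow_eq_one_iff (ZMod p) r).1 h)
  refine ⟨(u : ZMod p).val, (ZMod.val_coe_unit_coprime u).symm, ?_⟩
  have not_dvd : ¬ (p : ℤ) ∣ ((u : ZMod p).val : ℤ) ^ r - 1 := by
    rw [← ZMod.intCast_zmod_eq_zero_iff_dvd]
    push_cast
    rw [ZMod.natCast_zmod_val, sub_eq_zero]
    rwa [← Units.val_pow_eq_pow_val, Units.val_eq_one]
  have norm_eq := (Padic.norm_int_le_one (p := p) _).eq_of_not_lt
    (mt Padic.norm_intCast_lt_one_iff.1 not_dvd)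
  exact_mod_cast norm_eq

theorem norm_depletedBernoulli_le_one {r : ℕ} (hr : 0 < r) (hnd : ¬ (p - 1) ∣ r) :
    ‖(depletedBernoulli p r : ℚ_[p])‖ ≤ 1 := by
  obtain ⟨c, hc, hunit⟩ := exists_coprime_norm_pow_sub_one_eq_one hnd
  have h := le_of_tendsto' (tendsto_voronoiSum hr hc).norm fun M =>
    by exact_mod_cast Padic.norm_int_le_one (p := p) (voronoiSum (p ^ (M + 1)) c (r - 1))
  rwa [norm_mul, hunit, one_mul] at h

lemma norm_natCast_sub_le_of_modEq {m n k : ℕ} (h : m ≡ n [MOD p ^ k]) :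
    ‖(m - n : ℚ_[p])‖ ≤ (p : ℝ) ^ (-k : ℤ) := by
  have := (Padic.norm_int_le_pow_iff_dvd (p := p) (m - n) k).2
    (by exact_mod_cast Nat.modEq_iff_dvd.1 h.symm)
  exact_mod_cast this

lemma le_padicValRat_iff_norm_le {q : ℚ} (hq : q ≠ 0) (n : ℤ) :
    n ≤ padicValRat p q ↔ ‖(q : ℚ_[p])‖ ≤ (p : ℝ) ^ (-n) := by
  rw [Padic.norm_eq_zpow_neg_valuation (Rat.cast_ne_zero.2 hq), Padic.valuation_ratCast,
    zpow_le_zpow_iff_right₀ (by exact_mod_cast hp.out.one_lt), neg_le_neg_iff]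

theorem kummer_congruence_strong_general {a r s : ℕ} (hr : 0 < r) (hs : 0 < s)
    (hnd : ¬ (p - 1) ∣ r) (hrs : r ≡ s [MOD p ^ a * (p - 1)]) :
    ‖((depletedBernoulli p r - depletedBernoulli p s : ℚ) : ℚ_[p])‖ ≤
      (p : ℝ) ^ (-(a + 1 : ℕ) : ℤ) := by
  obtain ⟨c, hc, hunit⟩ := exists_coprime_norm_pow_sub_one_eq_one hnd
  have hnds : ¬ (p - 1) ∣ s := by rwa [← hrs.dvd_iff (dvd_mul_left _ _)]
  rw [← Nat.totient_prime_pow_succ hp.out] at hrs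
  have hrs' : r - 1 ≡ s - 1 [MOD (p ^ (a + 1)).totient] := hrs.sub hr hs rfl
  set ε := (p : ℝ) ^ (-(a + 1 : ℕ) : ℤ)
  set x := (depletedBernoulli p r : ℚ_[p])
  set y := (depletedBernoulli p s : ℚ_[p])
  have pow_close : ‖(c : ℚ_[p]) ^ s - c ^ r‖ ≤ ε := by
    have := norm_natCast_sub_le_of_modEq
      (pow_modEq_pow_of_modEq_totient (hc.symm.pow_right (a + 1)) hrs.symm)
    exact_mod_cast this
  have limits_close : ‖((c : ℚ_[p]) ^ r - 1) * x - ((c : ℚ_[p]) ^ s - 1) * y‖ ≤ ε := by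
    refine le_of_tendsto ((tendsto_voronoiSum hr hc).sub (tendsto_voronoiSum hs hc)).norm ?_
    filter_upwards [eventually_ge_atTop a] with M hM
    exact norm_natCast_sub_le_of_modEq
      (voronoiSum_modEq (hc.pow_left _) (pow_dvd_pow p (by lia)) hrs')
  calc ‖((depletedBernoulli p r - depletedBernoulli p s : ℚ) : ℚ_[p])‖
      = ‖((c : ℚ_[p]) ^ r - 1) * (x - y)‖ := by rw [Rat.cast_sub, norm_mul, hunit, one_mul]
    _ = ‖(((c : ℚ_[p]) ^ r - 1) * x - ((c : ℚ_[p]) ^ s - 1) * y) +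
          ((c : ℚ_[p]) ^ s - c ^ r) * y‖ := by ring_nf
    _ ≤ max ‖((c : ℚ_[p]) ^ r - 1) * x - ((c : ℚ_[p]) ^ s - 1) * y‖
          ‖((c : ℚ_[p]) ^ s - c ^ r) * y‖ := IsUltrametricDist.norm_add_le_max _ _
    _ ≤ ε := max_le limits_close <| by
        rw [norm_mul]
        exact (mul_le_of_le_one_right (norm_nonneg _)
          (norm_depletedBernoulli_le_one hs hnds)).trans pow_close

end Padic

theorem kummer_congruence_strong (p : ℕ) (hp : p.Prime) (hp3 : 3 < p)
    (a : ℕ) (r s : ℕ) (hr : 0 < r) (hs : 0 < s) (hre : Even r) (hse : Even s)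
    (hnd : ¬ (p - 1) ∣ r) (hcong : (p : ℤ) ^ a * ((p : ℤ) - 1) ∣ (s : ℤ) - (r : ℤ)) :
    (1 - (p : ℚ) ^ (r - 1)) * bernoulli r / r = (1 - (p : ℚ) ^ (s - 1)) * bernoulli s / s ∨
    ((a + 1 : ℕ) : ℤ) ≤ padicValRat p
      ((1 - (p : ℚ) ^ (r - 1)) * bernoulli r / r - (1 - (p : ℚ) ^ (s - 1)) * bernoulli s / s) := by
  have := Fact.mk hp
  have hrs : r ≡ s [MOD p ^ a * (p - 1)] := by
    rw [Nat.modEq_iff_dvd]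
    push_cast [hp.one_le]
    exact hcong
  exact or_iff_not_imp_left.2 fun hne => (le_padicValRat_iff_norm_le (sub_ne_zero.2 hne) _).2
    (kummer_congruence_strong_general hr hs hnd hrs)
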